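/- arXiv:1909.04014 — 5 statements merged into one kernel-verified Lean document; each statement's English description precedes it below -/
import Mathlib

section
/- Let A → B be a flat ring homomorphism between integral domains with B ≠ 0 (so that A → B is injective and M ⊗_A B → N ⊗_A B is injective for any inclusion M ⊆ N of A-modules). Then: (1) if M is a saturated submodule of an A-module N (i.e. N/M is torsion-free over A), then the image of M ⊗_A B in N ⊗_A B is a saturated B-submodule of N ⊗_A B; (2) the image of M^sat ⊗_A B in N ⊗_A B equals the saturation over B of the image of M ⊗_A B in N ⊗_A B. -/
/-! The heart of the matter is that flat base change between domains preserves torsion-freeness.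
A torsion-free `A`-module `P` embeds in its localization `V` at `A⁰`, a vector space over
`Frac A`. Vector spaces over `Frac A` are flat over `Frac A`, hence over `A`; so `B ⊗[A] V` is flat
over `B`, hence torsion-free, and `B ⊗[A] P` embeds in it because `B` is flat over `A`
(`isTorsionFree_baseChange`). Right exactness of the tensor product identifies
`(B ⊗[A] N) ⧸ M.baseChange B` with `B ⊗[A] (N ⧸ M)`, which gives part (1) in the elementwise form
`mem_baseChange_of_smul_mem`. For part (2), `M.sat` is saturated
(`Submodule.isTorsionFree_quotient_sat`), hence so is `M.sat.baseChange B` by part (1), and it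
therefore contains the saturation of `M.baseChange B`; the other inclusion is checked on pure
tensors, and uses that nonzero elements of `A` remain nonzero in `B`. -/

open TensorProduct

/-- The saturation of a submodule `M ⊆ N` over a domain `A`:
the preimage under `N → N/M` of the torsion submodule of `N/M`, i.e.
`{n ∈ N : a • n ∈ M for some nonzero a ∈ A}`. -/
noncomputable def Submodule.sat {A N : Type*} [CommRing A] [IsDomain A]
    [AddCommGroup N] [Module A N] (M : Submodule A N) : Submodule A N :=
  (Submodule.torsion A (N ⧸ M)).comap M.mkQ

open scoped nonZeroDivisors

/-- Torsion-freeness is preserved by flat base change between domains. -/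
theorem isTorsionFree_baseChange {A B P : Type*} [CommRing A] [IsDomain A]
    [CommRing B] [IsDomain B] [Algebra A B] [Module.Flat A B]
    [AddCommGroup P] [Module A P] [Module.IsTorsionFree A P] :
    Module.IsTorsionFree B (B ⊗[A] P) := by
  let V := LocalizedModule A⁰ P
  let f : P →ₗ[A] V := LocalizedModule.mkLinearMap A⁰ P
  have hf : Function.Injective f := by
    rw [← LinearMap.ker_eq_bot, LinearMap.ker_eq_bot']
    intro x hx
    obtain ⟨c, hc⟩ := (IsLocalizedModule.eq_zero_iff A⁰ f).1 hx
    exact (smul_eq_zero.1 hc).resolve_left (nonZeroDivisors.ne_zero c.2)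
  have : Module.Flat (FractionRing A) V := Module.Flat.of_free
  have : Module.Flat A V := Module.Flat.trans A (FractionRing A) V
  exact (Module.Flat.lTensor_preserves_injective_linearMap (M := B) f hf).moduleIsTorsionFree
    (f.baseChange B) fun b x ↦ (f.baseChange B).map_smul b x

theorem mem_baseChange_iff {A B N : Type*} [CommRing A] [CommRing B] [Algebra A B]
    [AddCommGroup N] [Module A N] (M : Submodule A N) (x : B ⊗[A] N) :
    x ∈ M.baseChange B ↔ M.mkQ.baseChange B x = 0 :=
  (lTensor_exact B (LinearMap.exact_subtype_mkQ M) M.mkQ_surjective x).symm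

/-- If `M` is saturated in `N`, then `M.baseChange B` is saturated in `B ⊗[A] N`. -/
theorem mem_baseChange_of_smul_mem {A B N : Type*} [CommRing A] [IsDomain A]
    [CommRing B] [IsDomain B] [Algebra A B] [Module.Flat A B]
    [AddCommGroup N] [Module A N] (M : Submodule A N) [Module.IsTorsionFree A (N ⧸ M)]
    {b : B} (hb : b ≠ 0) {x : B ⊗[A] N} (hx : b • x ∈ M.baseChange B) :
    x ∈ M.baseChange B := by
  have : Module.IsTorsionFree B (B ⊗[A] (N ⧸ M)) := isTorsionFree_baseChange
  rw [mem_baseChange_iff, map_smul] at hx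
  rw [mem_baseChange_iff]
  exact (smul_eq_zero.1 hx).resolve_left hb

theorem Submodule.mem_sat_iff {A N : Type*} [CommRing A] [IsDomain A]
    [AddCommGroup N] [Module A N] (M : Submodule A N) (n : N) :
    n ∈ M.sat ↔ ∃ a : A, a ≠ 0 ∧ a • n ∈ M := by
  rw [Submodule.sat, Submodule.mem_comap, Submodule.mem_torsion_iff]
  have key (a : A) : a • M.mkQ n = 0 ↔ a • n ∈ M := by
    rw [← map_smul, Submodule.mkQ_apply, Submodule.Quotient.mk_eq_zero]
  constructor
  · rintro ⟨a, ha⟩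
    exact ⟨a, nonZeroDivisors.ne_zero a.2, (key a).1 ha⟩
  · rintro ⟨a, ha, h⟩
    exact ⟨⟨a, mem_nonZeroDivisors_of_ne_zero ha⟩, (key a).2 h⟩

theorem Submodule.isTorsionFree_quotient_sat {A N : Type*} [CommRing A] [IsDomain A]
    [AddCommGroup N] [Module A N] (M : Submodule A N) :
    Module.IsTorsionFree A (N ⧸ M.sat) := by
  rw [Module.isTorsionFree_iff_smul_eq_zero]
  intro a q
  refine fun h ↦ or_iff_not_imp_left.2 fun ha ↦ ?_
  obtain ⟨n, rfl⟩ := M.sat.mkQ_surjective q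
  rw [← map_smul, Submodule.mkQ_apply, Submodule.Quotient.mk_eq_zero, mem_sat_iff] at h
  obtain ⟨c, hc, hcn⟩ := h
  rw [Submodule.mkQ_apply, Submodule.Quotient.mk_eq_zero, mem_sat_iff]
  exact ⟨c * a, mul_ne_zero hc ha, by rwa [mul_smul]⟩

/-- Let `A → B` be a flat ring homomorphism between integral domains
(with `B ≠ 0`).  (1) If `M` is a saturated submodule of an `A`-module `N` (i.e. `N/M` is
torsion-free over `A`), then the image `M.baseChange B` of `M ⊗[A] B` in `N ⊗[A] B` is a
saturated `B`-submodule.  (2) The image of `M^sat ⊗[A] B` in `N ⊗[A] B` equals the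
saturation over `B` of the image of `M ⊗[A] B`. -/
theorem saturation_baseChange {A B N : Type*} [CommRing A] [IsDomain A]
    [CommRing B] [IsDomain B] [Algebra A B] [Module.Flat A B]
    [AddCommGroup N] [Module A N] (M : Submodule A N) :
    (NoZeroSMulDivisors A (N ⧸ M) → NoZeroSMulDivisors B ((B ⊗[A] N) ⧸ M.baseChange B)) ∧
    M.sat.baseChange B = (M.baseChange B).sat := by
  refine ⟨fun hM ↦ ⟨fun {b q} h ↦ or_iff_not_imp_left.2 fun hb ↦ ?_⟩, le_antisymm ?_ fun x hx ↦ ?_⟩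
  · have : Module.IsTorsionFree A (N ⧸ M) := .of_smul_eq_zero fun _ _ ↦
      hM.eq_zero_or_eq_zero_of_smul_eq_zero
    obtain ⟨x, rfl⟩ := (M.baseChange B).mkQ_surjective q
    rw [← map_smul, Submodule.mkQ_apply, Submodule.Quotient.mk_eq_zero] at h
    rw [Submodule.mkQ_apply, Submodule.Quotient.mk_eq_zero]
    exact mem_baseChange_of_smul_mem M hb h
  · rw [Submodule.baseChange_eq_span, Submodule.span_le]
    rintro _ ⟨n, hn, rfl⟩
    obtain ⟨a, ha, han⟩ := (M.mem_sat_iff n).1 hn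
    refine ((M.baseChange B).mem_sat_iff _).2 ⟨algebraMap A B a, ?_, ?_⟩
    · -- `B` is flat, hence torsion-free, over `A`, so `algebraMap A B` is injective.
      rw [Algebra.algebraMap_eq_smul_one]
      exact smul_ne_zero ha one_ne_zero
    · rw [algebraMap_smul, TensorProduct.mk_apply, ← TensorProduct.tmul_smul]
      exact Submodule.tmul_mem_baseChange_of_mem 1 han
  · have := M.isTorsionFree_quotient_sat
    obtain ⟨b, hb, hbx⟩ := ((M.baseChange B).mem_sat_iff x).1 hx
    have hle : M ≤ M.sat := fun n hn ↦ (M.mem_sat_iff n).2 ⟨1, one_ne_zero, by rwa [one_smul]⟩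
    exact mem_baseChange_of_smul_mem M.sat hb (Submodule.baseChange_mono B hle hbx)
end

section
/- Let (A, m_A, κ_A) be a reduced Noetherian local ring of characteristic p > 0 and let f: A → B be its normalization, i.e. B is the integral closure of A in its total ring of fractions. Assume that B is finite as an A-module, that B is a local ring with residue field κ_B, and that the residue field extension κ_B/κ_A is purely inseparable. Then the module of Kähler differentials Ω_{B/A} is zero if and only if A is normal, i.e. if and only if f: A → B is an isomorphism. -/
/-!
Since `B` is finite over `A`, vanishing of `Ω_{B/A}` says that the local map `A → B` is
unramified: `m_A B = m_B` and `κ_B / κ_A` is separable.  A separable and purely inseparable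
extension is trivial, so `B = A + m_A B`, and Nakayama's lemma makes `A → B` surjective; it is
injective because `A` embeds in its total ring of fractions.  Conversely, differentials of a
surjection vanish.
-/

open IsLocalRing in
/-- The residue extension is both separable and purely inseparable, hence trivial, and
`m_A B = m_B`; Nakayama's lemma applied to `B = A + m_A B` concludes. -/
theorem surjective_of_unramified_of_purelyInseparable
    (p : ℕ) (hp : p.Prime) (A B : Type*) [CommRing A] [CommRing B] [Algebra A B]
    [IsLocalRing A] [IsLocalRing B] [CharP A p] [Module.Finite A B]
    [IsLocalHom (algebraMap A B)] [Algebra.FormallyUnramified A B]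
    (hres : ∀ x : ResidueField B, ∃ n : ℕ,
      x ^ p ^ n ∈ ((residue B).comp (algebraMap A B)).range) :
    Function.Surjective (algebraMap A B) := by
  have hchar : CharP (ResidueField A) p := by
    have h0 : (p : ResidueField A) = 0 := by
      rw [← map_natCast (residue A), CharP.cast_eq_zero A p, map_zero]
    exact (CharP.charP_iff_prime_eq_zero hp).mpr h0
  have : ExpChar (ResidueField A) p := .prime hp
  have hpi : IsPurelyInseparable (ResidueField A) (ResidueField B) := by
    rw [isPurelyInseparable_iff_pow_mem _ p]
    intro x
    obtain ⟨n, a, ha⟩ := hres x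
    exact ⟨n, residue A a, ha⟩
  have hsurj := IsPurelyInseparable.surjective_algebraMap_of_isSeparable
    (ResidueField A) (ResidueField B)
  rw [← Algebra.coe_linearMap, ← LinearMap.range_eq_top, ← top_le_iff]
  apply Submodule.le_of_le_smul_of_le_jacobson_bot Module.Finite.fg_top
    (maximalIdeal_le_jacobson _)
  rw [Ideal.smul_top_eq_map, Algebra.FormallyUnramified.map_maximalIdeal]
  intro b _
  obtain ⟨a, ha⟩ := hsurj (residue B b)
  obtain ⟨a, rfl⟩ := residue_surjective a
  rw [← sub_add_cancel b (algebraMap A B a), add_comm]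
  refine Submodule.add_mem_sup ⟨a, rfl⟩ ?_
  change b - algebraMap A B a ∈ maximalIdeal B
  rw [← residue_eq_zero_iff, map_sub, sub_eq_zero, ← ha]
  rfl


set_option synthInstance.maxHeartbeats 1000000 in

/-- Let `(A, m_A, κ_A)` be a reduced Noetherian local ring of
characteristic `p > 0` and let `f : A → B` be its normalization, i.e. `B` is the integral
closure of `A` in its total ring of fractions `FractionRing A`.  Assume `B` is finite as
an `A`-module, that `B` is a local ring, and that the residue field extension `κ_B/κ_A`
is purely inseparable (every element of `κ_B` has a `p^n`-th power lying in the image of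
`A → κ_B`, for some `n`).  Then the module of Kähler differentials `Ω_{B/A}` is zero if
and only if `A` is normal, i.e. if and only if `f : A → B` is an isomorphism. -/
theorem kaehler_eq_zero_iff_normal
    (p : ℕ) (hp : p.Prime) (A : Type*) [CommRing A] [IsNoetherianRing A]
    [IsLocalRing A] [IsReduced A] [CharP A p]
    [Module.Finite A (integralClosure A (FractionRing A))]
    [IsLocalRing (integralClosure A (FractionRing A))]
    (hres : ∀ x : IsLocalRing.ResidueField (integralClosure A (FractionRing A)),
      ∃ n : ℕ, x ^ p ^ n ∈
        ((IsLocalRing.residue (integralClosure A (FractionRing A))).comp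
          (algebraMap A (integralClosure A (FractionRing A)))).range) :
    Subsingleton (KaehlerDifferential A (integralClosure A (FractionRing A))) ↔
      Function.Bijective (algebraMap A (integralClosure A (FractionRing A))) := by
  have hinj : Function.Injective (algebraMap A (integralClosure A (FractionRing A))) := by
    intro x y h
    exact IsFractionRing.injective A (FractionRing A) (congrArg Subtype.val h)
  constructor
  · intro h
    have : Algebra.FormallyUnramified A (integralClosure A (FractionRing A)) := ⟨h⟩
    have : IsLocalHom (algebraMap A (integralClosure A (FractionRing A))) :=
      (algebraMap_isIntegral_iff.mpr inferInstance).isLocalHom hinj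
    exact ⟨hinj, surjective_of_unramified_of_purelyInseparable p hp A _ hres⟩
  · intro h
    exact KaehlerDifferential.subsingleton_of_surjective _ _ h.2
end

section
/- Let (A, m_A, κ_A) be a local ring and let B be a local ring which is an A-algebra and is finitely generated as an A-module. Suppose that the induced extension of residue fields κ_A → κ_B is an isomorphism and that Ω_{B/A} = 0. Then the structure map A → B is surjective. -/
/-!
Since `Ω_{B/A} = 0`, the algebra `A → B` is unramified, and for a local homomorphism this gives
`m_A B = m_B` (`Algebra.FormallyUnramified.map_maximalIdeal`). As `A → κ_B = B / m_B` is surjective,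
`B = A · 1 + m_B = A · 1 + m_A B`, and Nakayama's lemma for the finite `A`-module `B` shows that
`A · 1 = B`.
-/

/-- Let `(A, m_A, κ_A)` be a local ring and let `B` be a local ring which
is an `A`-algebra, finitely generated as an `A`-module.  Suppose that the induced
extension of residue fields `κ_A → κ_B` is an isomorphism (expressed by: the composite
`φ : A → B → κ_B` is surjective and has kernel exactly `m_A`) and that `Ω_{B/A} = 0`.
Then the structure map `A → B` is surjective. -/
theorem surjective_of_kaehler_eq_zero
    (A B : Type*) [CommRing A] [IsLocalRing A] [CommRing B] [IsLocalRing B]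
    [Algebra A B] [Module.Finite A B]
    (hsurj : Function.Surjective ((IsLocalRing.residue B).comp (algebraMap A B)))
    (hker : RingHom.ker ((IsLocalRing.residue B).comp (algebraMap A B)) =
      IsLocalRing.maximalIdeal A)
    (hΩ : Subsingleton (KaehlerDifferential A B)) :
    Function.Surjective (algebraMap A B) := by
  -- `a ∈ A` with `a` invertible in `B` is not in the kernel `m_A` of `A → κ_B`, so it is a unit
  have : IsLocalHom (algebraMap A B) := ⟨fun a ha ↦ by
    by_contra h
    have h0 : a ∈ IsLocalRing.maximalIdeal A := (IsLocalRing.mem_maximalIdeal a).mpr h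
    rw [← hker, RingHom.mem_ker, RingHom.comp_apply, IsLocalRing.residue_eq_zero_iff] at h0
    exact h0 ha⟩
  have : Algebra.FormallyUnramified A B := ⟨hΩ⟩
  change Function.Surjective (Algebra.linearMap A B)
  rw [← LinearMap.range_eq_top, ← top_le_iff]
  apply Submodule.le_of_le_smul_of_le_jacobson_bot Module.Finite.fg_top
    (IsLocalRing.maximalIdeal_le_jacobson _)
  rw [Ideal.smul_top_eq_map, Algebra.FormallyUnramified.map_maximalIdeal]
  rintro x -
  obtain ⟨a, ha⟩ := hsurj (IsLocalRing.residue B x)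
  rw [RingHom.comp_apply, ← sub_eq_zero, ← map_sub, IsLocalRing.residue_eq_zero_iff] at ha
  rw [← sub_sub_self (algebraMap A B a) x]
  exact sub_mem (Submodule.mem_sup_left ⟨a, rfl⟩) (Submodule.mem_sup_right ha)
end

section
/- Let A be a Noetherian normal integral domain with fraction field Q, and let θ: M₁ → M₂ be an A-linear map of finitely generated A-modules such that θ ⊗_A Q : M₁ ⊗_A Q → M₂ ⊗_A Q is an isomorphism; let r denote the common rank of M₁ and M₂. Assume that (M₂)_𝔭 is torsion-free over A_𝔭 for every height-one prime ideal 𝔭 of A. Then for every height-one prime ideal 𝔭 of A, length_{A_𝔭}((M₂/θ(M₁))_𝔭) = length_{A_𝔭}((Λ^r M₁^∨ / (Λ^r θ^∨)(Λ^r M₂^∨))_𝔭), where M^∨ := Hom_A(M, A) denotes the dual module, θ^∨: M₂^∨ → M₁^∨ is the dual map, and Λ^r denotes the r-th exterior power. -/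
/-!
Fix a prime `𝔭` of height one and put `S = A \ 𝔭`, so that `A_𝔭` is a principal ideal domain. Both
lengths are equal to the order at `𝔭` of one determinant.

A finitely generated module `M` of rank `r` is, modulo torsion, free of rank `r` after localization
at `𝔭`. Clearing denominators gives maps `u : A^r → M` and `v : M → A^r` defined over `A` and some
`s ∈ S` such that `v ∘ u = s`, while `u ∘ v - s` takes torsion values (`exists_maps_of_finite`).
Choose `uᵢ, vᵢ, sᵢ` in this way for `Mᵢ` and let `T = v₂ ∘ θ ∘ u₁`, a square matrix over
`A`, injective because `θ ⊗ Q` is. Up to elements of `S`, the pairs `(uᵢ, vᵢ)` behave like mutually inverse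
isomorphisms, and `length_localized_coker_eq` extracts from this two equalities.

* Since `(M₂)_𝔭` is torsion-free, `coker θ` and `coker T` have localizations of the same length. The
  torsion of `M₁` is harmless: it is killed by `v₂ ∘ θ`. By Smith normal form over `A_𝔭` that length
  is the order of `det T` (`length_localized_coker_eq_ord_det`).
* Functionals do not see torsion, so on duals `vᵢ^∨ ∘ uᵢ^∨` and `uᵢ^∨ ∘ vᵢ^∨` are multiplication
  by `sᵢ`, and on `r`-th exterior powers multiplication by `sᵢ^r`. Therefore the cokernel of `⋀^r θ^∨`
  has the same localized length as the cokernel of `⋀^r T^∨`, which is multiplication by `det T` on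
  the rank one free module `⋀^r (A^r)^∨` (`exteriorPower.map_eq_det_smul`).
-/

/-- The length of a module, defined as the Krull dimension of its lattice of submodules
(the supremum of the lengths of strictly increasing chains of submodules). -/
noncomputable def Module.lengthOf (R M : Type*) [Ring R] [AddCommGroup M] [Module R M] :
    WithBot ℕ∞ :=
  Order.krullDim (Submodule R M)

/-! ### Square matrices over a principal ideal domain -/

theorem Ring.isPrincipalIdealRing_localization_of_height_eq_one {A : Type*} [CommRing A]
    [IsDomain A] [IsNoetherianRing A] [IsIntegrallyClosed A] (𝔭 : PrimeSpectrum A)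
    (h : Order.height 𝔭 = 1) : IsPrincipalIdealRing (Localization.AtPrime 𝔭.asIdeal) := by
  have hR : IsDomain (Localization.AtPrime 𝔭.asIdeal) :=
    IsLocalization.isDomain_localization 𝔭.asIdeal.primeCompl_le_nonZeroDivisors
  have hN : IsNoetherianRing (Localization.AtPrime 𝔭.asIdeal) :=
    IsLocalization.isNoetherianRing 𝔭.asIdeal.primeCompl _ inferInstance
  have hI : IsIntegrallyClosed (Localization.AtPrime 𝔭.asIdeal) :=
    isIntegrallyClosed_of_isLocalization _ 𝔭.asIdeal.primeCompl
      𝔭.asIdeal.primeCompl_le_nonZeroDivisors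
  have hdim : ringKrullDim (Localization.AtPrime 𝔭.asIdeal) = 1 := by
    rw [IsLocalization.AtPrime.ringKrullDim_eq_height 𝔭.asIdeal,
      PrimeSpectrum.height_eq_orderHeight, h]
    rfl
  have hle : Ring.KrullDimLE 1 (Localization.AtPrime 𝔭.asIdeal) :=
    Ring.krullDimLE_iff.mpr (by simp [hdim])
  have key := (tfae_of_isNoetherianRing_of_isLocalRing_of_isDomain
    (Localization.AtPrime 𝔭.asIdeal)).out 0 3
  refine key.mpr ⟨hI, fun P hP hP' ↦ ?_⟩
  exact IsLocalRing.eq_maximalIdeal (Ring.krullDimLE_one_iff_of_isPrime_bot.mp hle P hP hP')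

section PID
open Module
/-- The Smith normal form of `range T` writes `T` as `D ∘ e` with `D` diagonal in a suitable basis
and `e` invertible. Hence the cokernel is `∏ R / (aᵢ)` while `det T` is associated to `∏ aᵢ`. -/
theorem Module.length_quotient_range_eq_ord_det {R : Type*} [CommRing R] [IsDomain R]
    [IsPrincipalIdealRing R] {n : ℕ} (T : (Fin n → R) →ₗ[R] (Fin n → R))
    (hT : Function.Injective T) :
    Module.length R ((Fin n → R) ⧸ LinearMap.range T) = Ring.ord R (LinearMap.det T) := by
  set N := LinearMap.range T
  let b := Pi.basisFun R (Fin n)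
  have hN : finrank R N = finrank R (Fin n → R) :=
    (LinearEquiv.finrank_eq (LinearEquiv.ofInjective T hT)).symm
  set a := N.smithNormalFormCoeffs b hN
  set b' := N.smithNormalFormTopBasis b hN
  set c := N.smithNormalFormBotBasis b hN
  have hc : ∀ i, (c i : Fin n → R) = a i • b' i := N.smithNormalFormBotBasis_def b hN
  have ha : ∀ i, a i ≠ 0 := N.smithNormalFormCoeffs_ne_zero b hN
  let e : (Fin n → R) ≃ₗ[R] (Fin n → R) :=
    (LinearEquiv.ofInjective T hT).trans (c.equiv b' (Equiv.refl _))
  let D : (Fin n → R) →ₗ[R] (Fin n → R) := b'.constr R fun i ↦ a i • b' i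
  have hTD : T = D ∘ₗ e.toLinearMap := by
    have : D ∘ₗ (c.equiv b' (Equiv.refl _)).toLinearMap = N.subtype := by
      refine c.ext fun i ↦ ?_
      simp [D, hc]
    ext1 i
    rw [LinearEquiv.coe_trans, ← LinearMap.comp_assoc, this]
    rfl
  have hD : LinearMap.det D = ∏ i, a i := by
    rw [← LinearMap.det_toMatrix b',
      show LinearMap.toMatrix b' b' D = Matrix.diagonal a from ?_, Matrix.det_diagonal]
    ext i j
    by_cases hij : i = j
    · subst hij; simp [D, LinearMap.toMatrix_apply]
    · simp [D, LinearMap.toMatrix_apply, hij]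
  have hspan : Ideal.span {LinearMap.det T} = Ideal.span {∏ i, a i} := by
    rw [Ideal.span_singleton_eq_span_singleton, hTD, LinearMap.det_comp, hD]
    exact associated_mul_unit_left _ _ (LinearEquiv.isUnit_det' e)
  have hprod : ∀ s : Finset (Fin n), Ring.ord R (∏ i ∈ s, a i) = ∑ i ∈ s, Ring.ord R (a i) := by
    intro s
    induction s using Finset.cons_induction with
    | empty => simp
    | cons i s hi ih =>
      rw [Finset.prod_cons, Finset.sum_cons, Ring.ord_mul' _
        (mem_nonZeroDivisors_of_ne_zero (ha i)), ih]
  rw [(N.quotientEquivPiSpan b hN).length_eq, Module.length_pi_of_fintype, Ring.ord, hspan,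
    ← Ring.ord, hprod]
  rfl
end PID

/-! ### Exterior powers -/

namespace exteriorPower
open Module

variable {R M N : Type*} [CommRing R] [AddCommGroup M] [Module R M] [AddCommGroup N] [Module R N]

/-- The map `exteriorPower.map` is the restriction of the map of exterior algebras. -/
theorem coe_map_apply (n : ℕ) (f : M →ₗ[R] N) (x : ⋀[R]^n M) :
    (map n f x : ExteriorAlgebra R N) = ExteriorAlgebra.map f (x : ExteriorAlgebra R M) := by
  have : (⋀[R]^n N).subtype ∘ₗ map n f =
      (ExteriorAlgebra.map f).toLinearMap ∘ₗ (⋀[R]^n M).subtype := by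
    ext m
    simp [ExteriorAlgebra.map_apply_ιMulti, Function.comp_def]
  exact LinearMap.congr_fun this x

theorem range_map_eq (n : ℕ) (f : M →ₗ[R] N) :
    LinearMap.range (map n f) = ((⋀[R]^n M).map (ExteriorAlgebra.map f).toLinearMap).comap
      (⋀[R]^n N).subtype := by
  ext y
  simp only [LinearMap.mem_range, Submodule.mem_comap, Submodule.mem_map, Subtype.ext_iff,
    coe_map_apply]
  exact ⟨fun ⟨x, hx⟩ ↦ ⟨x, x.2, hx⟩, fun ⟨x, hx, h⟩ ↦ ⟨⟨x, hx⟩, h⟩⟩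

theorem map_smul_id (n : ℕ) (s : R) :
    map n (s • LinearMap.id : M →ₗ[R] M) = s ^ n • LinearMap.id := by
  ext1
  ext1 m
  have : (⇑(s • LinearMap.id : M →ₗ[R] M) ∘ m) = fun i ↦ s • m i := rfl
  simp only [LinearMap.compAlternatingMap_apply, map_apply_ιMulti, this,
    LinearMap.smul_apply, LinearMap.id_apply, (ιMulti R n).map_smul_univ (fun _ ↦ s) m]
  simp

/-- An endomorphism of a free module of rank `n` acts on the top exterior power by its
determinant. Under `⋀^n M ≃ R` the map `ιMulti` becomes a multiple of the determinant form of `b`. -/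
theorem map_eq_det_smul {n : ℕ} [Nontrivial R] (b : Basis (Fin n) R M) (f : M →ₗ[R] M) :
    map n f = LinearMap.det f • LinearMap.id := by
  have := Module.Free.of_basis b
  have := Module.Finite.of_basis b
  obtain ⟨e⟩ : Nonempty (R ≃ₗ[R] ⋀[R]^n M) := Module.nonempty_linearEquiv_of_finrank_eq_one <| by
    simp [exteriorPower.finrank_eq, Module.finrank_eq_card_basis b]
  ext1
  ext1 m
  apply e.symm.injective
  have h := (e.symm.toLinearMap.compAlternatingMap (ιMulti R n)).eq_smul_basis_det b
  have h1 := DFunLike.congr_fun h m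
  have h2 := DFunLike.congr_fun h (f ∘ m)
  simp only [LinearMap.compAlternatingMap_apply, LinearEquiv.coe_coe, AlternatingMap.smul_apply,
    Basis.det_comp, smul_eq_mul] at h1 h2
  simp only [LinearMap.compAlternatingMap_apply, map_apply_ιMulti, LinearMap.smul_apply,
    LinearMap.id_apply, map_smul, smul_eq_mul]
  rw [h1, h2]; ring

theorem map_map_eq_pow_smul (n : ℕ) {f : M →ₗ[R] N} {g : N →ₗ[R] M} {s : R}
    (h : g ∘ₗ f = s • LinearMap.id) (x : ⋀[R]^n M) : map n g (map n f x) = s ^ n • x := by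
  rw [← LinearMap.comp_apply, ← map_comp, h, map_smul_id]
  rfl

end exteriorPower

/-! ### Lengths of localized cokernels -/

section S
open Module
variable {A : Type*} [CommRing A] (S : Submonoid A)

theorem localizedModule_mk_eq_zero_iff {N : Type*} [AddCommGroup N] [Module A N] (x : N) (t : S) :
    LocalizedModule.mk x t = 0 ↔ ∃ c : S, c • x = 0 := by
  rw [← LocalizedModule.zero_mk (1 : S), LocalizedModule.mk_eq]
  simp only [smul_zero, one_smul]

/-- A linear map whose kernel and cokernel are `S`-torsion induces an isomorphism of
localizations at `S`. -/
theorem length_localized_eq_of_map {N N' : Type*} [AddCommGroup N] [Module A N]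
    [AddCommGroup N'] [Module A N'] (f : N →ₗ[A] N')
    (hinj : ∀ x, f x = 0 → ∃ s ∈ S, s • x = 0)
    (hsurj : ∀ y, ∃ s ∈ S, ∃ x, f x = s • y) :
    Module.length (Localization S) (LocalizedModule S N) =
      Module.length (Localization S) (LocalizedModule S N') := by
  refine (LinearEquiv.ofBijective (LocalizedModule.map S f) ⟨?_, ?_⟩).length_eq
  · rw [injective_iff_map_eq_zero]
    intro z hz
    induction z using LocalizedModule.induction_on with
    | _ x t =>
    rw [LocalizedModule.map_mk, localizedModule_mk_eq_zero_iff] at hz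
    obtain ⟨c, hc⟩ := hz
    obtain ⟨s, hs, h⟩ := hinj (c • x) (by rw [LinearMap.map_smul_of_tower, hc])
    rw [localizedModule_mk_eq_zero_iff]
    exact ⟨⟨s, hs⟩ * c, by rw [mul_smul]; exact h⟩
  · intro z
    induction z using LocalizedModule.induction_on with
    | _ y t =>
    obtain ⟨s, hs, x, hx⟩ := hsurj y
    refine ⟨LocalizedModule.mk x (⟨s, hs⟩ * t), ?_⟩
    rw [LocalizedModule.map_mk, hx]
    exact LocalizedModule.mk_cancel_common_left ⟨s, hs⟩ t y

/-- Comparison of the cokernels of `a : X₁ → X₂` and `v₂ ∘ a ∘ u₁ : Y₁ → Y₂`. The pairs `uᵢ : Yᵢ → Xᵢ`,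
`vᵢ : Xᵢ → Yᵢ` play the role of mutually inverse isomorphisms up to multiplication by `sᵢ ∈ S`.
For `i = 1` the identity `u₁ ∘ v₁ = s₁` is needed only after composing with `v₂ ∘ a`, which allows
`X₁` to have torsion. The comparison map is induced by `s₁ • v₂`. -/
theorem length_localized_coker_eq {X₁ X₂ Y₁ Y₂ : Type*}
    [AddCommGroup X₁] [Module A X₁] [AddCommGroup X₂] [Module A X₂]
    [AddCommGroup Y₁] [Module A Y₁] [AddCommGroup Y₂] [Module A Y₂]
    (a : X₁ →ₗ[A] X₂) (u₁ : Y₁ →ₗ[A] X₁) (v₁ : X₁ →ₗ[A] Y₁) (u₂ : Y₂ →ₗ[A] X₂) (v₂ : X₂ →ₗ[A] Y₂)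
    {s₁ s₂ : A} (hs₁ : s₁ ∈ S) (hs₂ : s₂ ∈ S)
    (h₁ : ∀ x, v₂ (a (u₁ (v₁ x))) = s₁ • v₂ (a x))
    (h₂ : ∀ y, v₂ (u₂ y) = s₂ • y)
    (h₃ : ∀ x, ∃ s ∈ S, s • u₂ (v₂ x) = s • s₂ • x) :
    Module.length (Localization S) (LocalizedModule S (Y₂ ⧸ LinearMap.range (v₂ ∘ₗ a ∘ₗ u₁))) =
      Module.length (Localization S) (LocalizedModule S (X₂ ⧸ LinearMap.range a)) := by
  let v : (X₂ ⧸ LinearMap.range a) →ₗ[A] (Y₂ ⧸ LinearMap.range (v₂ ∘ₗ a ∘ₗ u₁)) :=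
    Submodule.mapQ _ _ (s₁ • v₂) <| by
      rintro _ ⟨x, rfl⟩
      exact ⟨v₁ x, h₁ x⟩
  refine (length_localized_eq_of_map S v ?_ ?_).symm
  · intro x hx
    obtain ⟨x, rfl⟩ := Submodule.Quotient.mk_surjective _ x
    obtain ⟨y, hy⟩ := (Submodule.Quotient.mk_eq_zero _).mp
      (show Submodule.Quotient.mk (s₁ • v₂ x) = 0 from hx)
    obtain ⟨s, hs, h⟩ := h₃ (s₁ • x - a (u₁ y))
    have h0 : v₂ (s₁ • x - a (u₁ y)) = 0 := by
      rw [map_sub, map_smul, ← hy]; exact sub_self _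
    rw [h0, map_zero, smul_zero, smul_sub, smul_sub, eq_comm, sub_eq_zero] at h
    refine ⟨s * s₂ * s₁, S.mul_mem (S.mul_mem hs hs₂) hs₁, ?_⟩
    rw [← Submodule.Quotient.mk_smul, Submodule.Quotient.mk_eq_zero, mul_smul, mul_smul, h]
    exact Submodule.smul_mem _ _ (Submodule.smul_mem _ _ ⟨_, rfl⟩)
  · intro y
    obtain ⟨y, rfl⟩ := Submodule.Quotient.mk_surjective _ y
    refine ⟨s₁ * s₂, S.mul_mem hs₁ hs₂, Submodule.Quotient.mk (u₂ y), ?_⟩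
    rw [← Submodule.Quotient.mk_smul, mul_smul, ← h₂]
    rfl

theorem length_localized_quotient_eq {Y Z : Type*} [AddCommGroup Y] [Module A Y]
    [AddCommGroup Z] [Module A Z] [Module (Localization S) Z] [IsScalarTower A (Localization S) Z]
    (g : Y →ₗ[A] Z) [IsLocalizedModule S g] (N : Submodule A Y) :
    Module.length (Localization S) (LocalizedModule S (Y ⧸ N)) =
      Module.length (Localization S) (Z ⧸ N.localized' (Localization S) S g) := by
  let e := IsLocalizedModule.linearEquiv S
    (LocalizedModule.mkLinearMap S (Y ⧸ N)) (N.toLocalizedQuotient' (Localization S) S g)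
  exact (e.extendScalarsOfIsLocalization S (Localization S)).length_eq

theorem length_localized_quotient_range_smul [IsDomain A] {L : Type*} [AddCommGroup L] [Module A L]
    (e : A ≃ₗ[A] L) (d : A) :
    Module.length (Localization S)
      (LocalizedModule S (L ⧸ LinearMap.range (d • LinearMap.id : L →ₗ[A] L))) =
      Ring.ord (Localization S) (algebraMap A (Localization S) d) := by
  rw [length_localized_quotient_eq S (Algebra.linearMap A (Localization S) ∘ₗ e.symm.toLinearMap),
    Ring.ord]
  have : LinearMap.range (d • LinearMap.id : L →ₗ[A] L) = Submodule.span A {d • e 1} := by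
    ext x
    simp only [LinearMap.mem_range, Submodule.mem_span_singleton, LinearMap.smul_apply,
      LinearMap.id_apply]
    constructor
    · rintro ⟨y, rfl⟩
      refine ⟨e.symm y, ?_⟩
      rw [smul_comm, ← map_smul]; simp
    · rintro ⟨a, rfl⟩
      exact ⟨a • e 1, smul_comm _ _ _⟩
  rw [this, Submodule.localized'_span]
  have hd : (Algebra.linearMap A (Localization S) ∘ₗ e.symm.toLinearMap) (d • e 1) =
      algebraMap A (Localization S) d := by
    simp [Algebra.smul_def]
  rw [Set.image_singleton, hd]

/-- The length of the localized cokernel of an injective square matrix `T` over `A` is the order of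
`det T` in `Localization S`. -/
theorem length_localized_coker_eq_ord_det [IsDomain A] [IsDomain (Localization S)]
    [IsPrincipalIdealRing (Localization S)] {n : ℕ} (T : (Fin n → A) →ₗ[A] (Fin n → A))
    (hT : Function.Injective T) :
    Module.length (Localization S) (LocalizedModule S ((Fin n → A) ⧸ LinearMap.range T)) =
      Ring.ord (Localization S) (algebraMap A (Localization S) (LinearMap.det T)) := by
  let f : (Fin n → A) →ₗ[A] (Fin n → Localization S) :=
    .pi fun i ↦ Algebra.linearMap A (Localization S) ∘ₗ .proj i
  have hf : IsLocalizedModule S f := inferInstance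
  let T' := (IsLocalizedModule.map S f f T).extendScalarsOfIsLocalization S (Localization S)
  have hTinj : Function.Injective T' := IsLocalizedModule.map_injective S f f T hT
  have hdet : LinearMap.det T' = algebraMap A (Localization S) (LinearMap.det T) := by
    rw [← LinearMap.det_toMatrix', ← LinearMap.det_toMatrix', RingHom.map_det]
    congr 1
    ext i j
    have h : (Pi.single j 1 : Fin n → Localization S) = f (Pi.single j 1) := by
      ext k
      by_cases hk : k = j
      · subst hk; simp [f]
      · simp [f, hk]
    rw [LinearMap.toMatrix'_apply, RingHom.mapMatrix_apply, Matrix.map_apply,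
      LinearMap.toMatrix'_apply, h]
    change (IsLocalizedModule.map S f f T) (f _) i = _
    rw [IsLocalizedModule.map_apply]; rfl
  rw [length_localized_quotient_eq S f, LinearMap.localized'_range_eq_range_localizedMap _ S f f,
    ← hdet]
  exact Module.length_quotient_range_eq_ord_det T' hTinj

/-! ### Approximate bases of finitely generated modules -/

theorem exists_smul_eq_zero_of_localized [IsDomain A] (hS : S ≤ nonZeroDivisors A)
    {M : Type*} [AddCommGroup M] [Module A M] {w : M} {c : Localization S}
    (hc : c ∈ nonZeroDivisors (Localization S))
    (hcw : c • LocalizedModule.mkLinearMap S M w = 0) : ∃ a : A, a ≠ 0 ∧ a • w = 0 := by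
  have : IsDomain (Localization S) := IsLocalization.isDomain_localization hS
  obtain ⟨⟨a, d⟩, had⟩ := IsLocalization.surj S c
  have ha : a ≠ 0 := by
    rintro rfl
    rw [map_zero] at had
    exact (mul_ne_zero (nonZeroDivisors.ne_zero hc)
      (IsLocalization.map_units (Localization S) d).ne_zero) had
  have haw : LocalizedModule.mkLinearMap S M (a • w) = 0 := by
    rw [map_smul, ← algebraMap_smul (Localization S) a (LocalizedModule.mkLinearMap S M w), ← had,
      mul_comm, mul_smul, hcw, smul_zero]
  obtain ⟨e, he⟩ := (localizedModule_mk_eq_zero_iff S (a • w) 1).mp haw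
  refine ⟨e * a, mul_ne_zero (nonZeroDivisors.ne_zero (hS e.2)) ha, ?_⟩
  rw [mul_smul]; exact he

theorem exists_surjective_ker_eq_torsion (R M : Type*) [CommRing R] [IsDomain R]
    [IsPrincipalIdealRing R] [AddCommGroup M] [Module R M] [Module.Finite R M] :
    ∃ (n : ℕ) (q : M →ₗ[R] (Fin n → R)), Function.Surjective q ∧
      LinearMap.ker q = Submodule.torsion R M := by
  obtain ⟨n, b⟩ : Σ n, Basis (Fin n) R (M ⧸ Submodule.torsion R M) :=
    Module.basisOfFiniteTypeTorsionFree'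
  refine ⟨n, b.equivFun.toLinearMap ∘ₗ (Submodule.torsion R M).mkQ,
    b.equivFun.surjective.comp (Submodule.mkQ_surjective _), ?_⟩
  rw [LinearEquiv.ker_comp, Submodule.ker_mkQ]

/-- When `Localization S` is a principal ideal domain, a finitely generated `A`-module `M` is free
modulo torsion after localization at `S`. Clearing denominators in a localized basis yields maps
`u : A^n → M` and `v : M → A^n` over `A` with `v ∘ u = s` for some `s ∈ S`, and with `u ∘ v = s` up to
torsion elements of `M`. -/
theorem exists_maps_of_finite [IsDomain A] [IsNoetherianRing A]
    [IsPrincipalIdealRing (Localization S)] (hS : S ≤ nonZeroDivisors A)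
    (M : Type*) [AddCommGroup M] [Module A M] [Module.Finite A M] :
    ∃ (n : ℕ) (u : (Fin n → A) →ₗ[A] M) (v : M →ₗ[A] (Fin n → A)), ∃ s ∈ S,
      (∀ y, v (u y) = s • y) ∧ ∀ x, ∃ c : A, c ≠ 0 ∧ c • (u (v x) - s • x) = 0 := by
  have : IsDomain (Localization S) := IsLocalization.isDomain_localization hS
  obtain ⟨n, q', hq', hker⟩ := exists_surjective_ker_eq_torsion (Localization S)
    (LocalizedModule S M)
  let f : (Fin n → A) →ₗ[A] (Fin n → Localization S) :=
    .pi fun i ↦ Algebra.linearMap A (Localization S) ∘ₗ .proj i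
  have hf : IsLocalizedModule S f := inferInstance
  have hfi : Function.Injective f := fun x y h ↦ funext fun i ↦
    IsLocalization.injective (Localization S) hS (congrFun h i)
  let q : LocalizedModule S M →ₗ[A] (Fin n → Localization S) := q'.restrictScalars A
  have hq : Function.Surjective q := hq'
  let ι := LocalizedModule.mkLinearMap S M
  have : Module.FinitePresentation A M := Module.finitePresentation_of_finite A M
  -- a multiple of the projection `M → M_S / torsion ≃ (A_S)^n` takes values in `A^n`
  obtain ⟨v, s, hv⟩ := Module.FinitePresentation.exists_lift_of_isLocalizedModule S f (q ∘ₗ ι)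
  -- a multiple of a section of `q` over the standard basis takes values in `M`
  choose x hx using fun i : Fin n ↦ hq (f (Pi.single i 1))
  let g : (Fin n → A) →ₗ[A] LocalizedModule S M := (Pi.basisFun A (Fin n)).constr A x
  have hg : q ∘ₗ g = f := (Pi.basisFun A (Fin n)).ext fun i ↦ by simp [g, hx]
  obtain ⟨u, t, hu⟩ := Module.FinitePresentation.exists_lift_of_isLocalizedModule S ι g
  replace hv : ∀ m, f (v m) = (s : A) • q (ι m) := fun m ↦ LinearMap.congr_fun hv m
  replace hu : ∀ y, ι (u y) = (t : A) • g y := fun y ↦ LinearMap.congr_fun hu y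
  replace hg : ∀ y, q (g y) = f y := fun y ↦ LinearMap.congr_fun hg y
  have hvu : ∀ y, v (u y) = ((s : A) * t) • y := fun y ↦ hfi <| by
    rw [hv, hu, map_smul, hg, map_smul, mul_smul]
  refine ⟨n, u, v, s * t, S.mul_mem s.2 t.2, hvu, fun m ↦ ?_⟩
  set w := u (v m) - ((s : A) * t) • m
  have hw : v w = 0 := by rw [map_sub, hvu, map_smul, sub_self]
  have hs : (s : A) ≠ 0 := nonZeroDivisors.ne_zero (hS s.2)
  have hqw : q (ι w) = 0 := by
    have := hv w
    rw [hw, map_zero, eq_comm] at this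
    ext i
    have h := congrFun this i
    rw [Pi.smul_apply, Algebra.smul_def] at h
    exact (mul_eq_zero.mp h).resolve_left
      (fun h0 ↦ hs ((IsLocalization.injective (Localization S) hS) (h0.trans (map_zero _).symm)))
  have hmem : ι w ∈ Submodule.torsion (Localization S) (LocalizedModule S M) := by
    rw [← hker]
    exact hqw
  obtain ⟨⟨c, hc⟩, hcw⟩ := hmem
  exact exists_smul_eq_zero_of_localized S hS hc hcw

/-- The number `n` of `exists_maps_of_finite` is the rank of `M`. -/
theorem finrank_eq_of_maps [IsDomain A] {M : Type*} [AddCommGroup M] [Module A M]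
    [Module.Finite A M] {n : ℕ} (u : (Fin n → A) →ₗ[A] M) (v : M →ₗ[A] (Fin n → A)) {s : A}
    (hs : s ≠ 0)
    (huv : ∀ y, v (u y) = s • y) (hvu : ∀ x, ∃ c : A, c ≠ 0 ∧ c • (u (v x) - s • x) = 0) :
    Module.finrank A M = n := by
  have hu : Function.Injective u := by
    rw [injective_iff_map_eq_zero]
    intro y hy
    have := huv y
    rw [hy, map_zero, eq_comm] at this
    exact (smul_eq_zero.mp this).resolve_left hs
  have hker : Module.rank A (LinearMap.ker v) = 0 := by
    rw [rank_eq_zero_iff]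
    rintro ⟨x, hx⟩
    obtain ⟨c, hc, h⟩ := hvu x
    rw [LinearMap.mem_ker.mp hx, map_zero, zero_sub, smul_neg, neg_eq_zero, smul_smul] at h
    exact ⟨c * s, mul_ne_zero hc hs, Subtype.ext h⟩
  apply le_antisymm
  · have h1 := Submodule.rank_quotient_add_rank (LinearMap.ker v)
    rw [hker, add_zero] at h1
    rw [Module.finrank, ← h1, ← Module.finrank, v.quotKerEquivRange.finrank_eq]
    exact (Submodule.finrank_le _).trans_eq (by simp)
  · simpa using LinearMap.finrank_le_finrank_of_injective hu

end S

/-! ### Torsion and duality -/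

section Torsion

variable {A : Type*} [CommRing A] [IsDomain A]

/-- If `θ ⊗ Q` is injective, then an element that `θ` sends to a torsion element is torsion. -/
theorem exists_smul_eq_zero_of_baseChange_injective
    {M₁ M₂ : Type*} [AddCommGroup M₁] [Module A M₁] [AddCommGroup M₂] [Module A M₂]
    (θ : M₁ →ₗ[A] M₂) (hθ : Function.Injective (LinearMap.baseChange (FractionRing A) θ))
    {x : M₁} {c : A} (hc : c ≠ 0) (hx : c • θ x = 0) : ∃ a : A, a ≠ 0 ∧ a • x = 0 := by
  let S := nonZeroDivisors A
  have h2 : TensorProduct.mk A (FractionRing A) M₂ 1 (θ x) = 0 :=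
    (IsLocalizedModule.eq_zero_iff S (TensorProduct.mk A (FractionRing A) M₂ 1)).mpr
      ⟨⟨c, mem_nonZeroDivisors_of_ne_zero hc⟩, hx⟩
  have h1 : TensorProduct.mk A (FractionRing A) M₁ 1 x = 0 := by
    apply hθ
    rw [map_zero, ← h2]
    simp
  obtain ⟨a, ha⟩ := (IsLocalizedModule.eq_zero_iff S
    (TensorProduct.mk A (FractionRing A) M₁ 1)).mp h1
  exact ⟨a, nonZeroDivisors.ne_zero a.2, ha⟩

theorem map_eq_of_smul_sub_eq_zero {M N : Type*} [AddCommGroup M] [Module A M]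
    [AddCommGroup N] [Module A N] [Module.IsTorsionFree A N] (φ : M →ₗ[A] N) {x y : M}
    (h : ∃ c : A, c ≠ 0 ∧ c • (x - y) = 0) : φ x = φ y := by
  obtain ⟨c, hc, h⟩ := h
  have h' := congrArg φ h
  rw [map_smul, map_zero, map_sub, smul_eq_zero] at h'
  exact sub_eq_zero.mp (h'.resolve_left hc)

/-- The identity `u ∘ v = s`, valid only up to torsion, becomes exact on dual modules, since
functionals vanish on torsion. -/
theorem dualMap_comp_dualMap_eq_smul {M F : Type*} [AddCommGroup M] [Module A M]
    [AddCommGroup F] [Module A F] (u : F →ₗ[A] M) (v : M →ₗ[A] F) {s : A}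
    (h : ∀ x, ∃ c : A, c ≠ 0 ∧ c • (u (v x) - s • x) = 0) :
    v.dualMap ∘ₗ u.dualMap = s • LinearMap.id := by
  ext φ x
  simpa using map_eq_of_smul_sub_eq_zero φ (h x)

end Torsion

/-- The dimension of `M ⊗ Q` agrees with the rank of `M` over the domain itself. -/
theorem finrank_fractionRing_tensorProduct {A : Type*} [CommRing A] [IsDomain A] (M : Type*)
    [AddCommGroup M] [Module A M] :
    Module.finrank (FractionRing A) (TensorProduct A (FractionRing A) M) = Module.finrank A M :=
  (IsLocalization.finrank_eq (FractionRing A) (nonZeroDivisors A) le_rfl).trans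
    (IsLocalizedModule.finrank_eq (nonZeroDivisors A)
      (TensorProduct.mk A (FractionRing A) M 1) le_rfl)

/-- Let `A` be a Noetherian normal (integrally closed) domain with
fraction field `Q` and let `θ : M₁ → M₂` be a map of finitely generated `A`-modules which
becomes an isomorphism after tensoring with `Q`; let `r` be the common rank of `M₁`, `M₂`.
Assume `(M₂)_𝔭` is torsion-free for every height-one prime `𝔭`.  Then for every
height-one prime `𝔭` of `A`,
`length ((M₂/θ(M₁))_𝔭) = length ((Λ^r M₁^∨ / (Λ^r θ^∨)(Λ^r M₂^∨))_𝔭)`,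
where `M^∨ = Hom_A(M, A)`, `θ^∨ : M₂^∨ → M₁^∨` is the dual map and `Λ^r` is the `r`-th
exterior power (realized inside the exterior algebra, with `Λ^r θ^∨` induced by the
functorial map of exterior algebras). -/
theorem length_coker_eq_length_exterior_dual
    (A : Type*) [CommRing A] [IsDomain A] [IsNoetherianRing A] [IsIntegrallyClosed A]
    (M₁ M₂ : Type*) [AddCommGroup M₁] [Module A M₁] [Module.Finite A M₁]
    [AddCommGroup M₂] [Module A M₂] [Module.Finite A M₂]
    (θ : M₁ →ₗ[A] M₂)
    (hθ : Function.Bijective (LinearMap.baseChange (FractionRing A) θ))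
    (r : ℕ) (hr : Module.finrank (FractionRing A) (TensorProduct A (FractionRing A) M₁) = r)
    (htf : ∀ 𝔭 : PrimeSpectrum A, Order.height 𝔭 = 1 →
      NoZeroSMulDivisors (Localization.AtPrime 𝔭.asIdeal)
        (LocalizedModule 𝔭.asIdeal.primeCompl M₂)) :
    ∀ 𝔭 : PrimeSpectrum A, Order.height 𝔭 = 1 →
      Module.lengthOf (Localization.AtPrime 𝔭.asIdeal)
        (LocalizedModule 𝔭.asIdeal.primeCompl (M₂ ⧸ LinearMap.range θ)) =
      Module.lengthOf (Localization.AtPrime 𝔭.asIdeal)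
        (LocalizedModule 𝔭.asIdeal.primeCompl
          (↥(⋀[A]^r (Module.Dual A M₁)) ⧸
            (((⋀[A]^r (Module.Dual A M₂)).map
                (ExteriorAlgebra.map θ.dualMap).toLinearMap).comap
              (⋀[A]^r (Module.Dual A M₁)).subtype))) := by
  intro 𝔭 h𝔭
  rw [Module.lengthOf, Module.lengthOf, ← Module.coe_length, ← Module.coe_length,
    ← exteriorPower.range_map_eq]
  congr 1
  set S := 𝔭.asIdeal.primeCompl
  have hS : S ≤ nonZeroDivisors A := 𝔭.asIdeal.primeCompl_le_nonZeroDivisors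
  have hPID : IsPrincipalIdealRing (Localization S) :=
    Ring.isPrincipalIdealRing_localization_of_height_eq_one 𝔭 h𝔭
  have hdom : IsDomain (Localization S) := IsLocalization.isDomain_localization hS
  have htf' : NoZeroSMulDivisors (Localization S) (LocalizedModule S M₂) := htf 𝔭 h𝔭
  obtain ⟨n₁, u₁, v₁, s₁, hs₁, hvu₁, huv₁⟩ := exists_maps_of_finite S hS M₁
  obtain ⟨n₂, u₂, v₂, s₂, hs₂, hvu₂, huv₂⟩ := exists_maps_of_finite S hS M₂
  have hs₁0 : s₁ ≠ 0 := nonZeroDivisors.ne_zero (hS hs₁)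
  have hs₂0 : s₂ ≠ 0 := nonZeroDivisors.ne_zero (hS hs₂)
  obtain rfl : n₁ = r := by
    rw [← finrank_eq_of_maps u₁ v₁ hs₁0 hvu₁ huv₁, ← hr]
    exact (finrank_fractionRing_tensorProduct M₁).symm
  obtain rfl : n₂ = n₁ := by
    rw [← finrank_eq_of_maps u₂ v₂ hs₂0 hvu₂ huv₂, ← hr,
      (LinearEquiv.ofBijective _ hθ).finrank_eq]
    exact (finrank_fractionRing_tensorProduct M₂).symm
  -- `T` is the matrix of `θ` with respect to the two approximate bases
  let T := v₂ ∘ₗ θ ∘ₗ u₁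
  have hT : Function.Injective T := by
    rw [injective_iff_map_eq_zero]
    intro y hy
    obtain ⟨c, hc, h⟩ := huv₂ (θ (u₁ y))
    rw [show v₂ (θ (u₁ y)) = 0 from hy, map_zero, zero_sub, smul_neg, neg_eq_zero, smul_smul] at h
    obtain ⟨a, ha, h'⟩ := exists_smul_eq_zero_of_baseChange_injective θ hθ.1
      (mul_ne_zero hc hs₂0) h
    have h'' := congrArg v₁ h'
    rw [map_smul, hvu₁, map_zero, smul_smul] at h''
    exact (smul_eq_zero.mp h'').resolve_left (mul_ne_zero ha hs₁0)
  -- torsion-freeness of `(M₂)_𝔭` turns an error killed by `c ≠ 0` into one killed by some `s ∈ S`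
  have hM₂ : ∀ x, ∃ s ∈ S, s • u₂ (v₂ x) = s • s₂ • x := by
    intro x
    obtain ⟨c, hc, h⟩ := huv₂ x
    have h' := congrArg (LocalizedModule.mkLinearMap S M₂) h
    rw [map_smul, map_zero, ← algebraMap_smul (Localization S) c] at h'
    have h'' := (htf'.eq_zero_or_eq_zero_of_smul_eq_zero h').resolve_left fun h0 ↦
      hc (IsLocalization.injective (Localization S) hS (h0.trans (map_zero _).symm))
    obtain ⟨e, he⟩ := (IsLocalizedModule.eq_zero_iff S _).mp h''
    refine ⟨e, e.2, ?_⟩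
    rw [← sub_eq_zero, ← smul_sub]
    exact he
  -- left-hand side: the order of `det T` at `𝔭`
  rw [← length_localized_coker_eq S θ u₁ v₁ u₂ v₂ hs₁ hs₂
    (fun x ↦ by
      simpa using map_eq_of_smul_sub_eq_zero (v₂ ∘ₗ θ) (huv₁ x)) hvu₂ hM₂,
    length_localized_coker_eq_ord_det S T hT]
  -- right-hand side: `u₁^∨` and `v₂^∨` put `⋀^n θ^∨` into the form `⋀^n T^∨ = det T`
  have hD₁ : v₁.dualMap ∘ₗ u₁.dualMap = s₁ • LinearMap.id :=
    dualMap_comp_dualMap_eq_smul u₁ v₁ huv₁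
  have hD₂ : v₂.dualMap ∘ₗ u₂.dualMap = s₂ • LinearMap.id :=
    dualMap_comp_dualMap_eq_smul u₂ v₂ huv₂
  have hD₁' : u₁.dualMap ∘ₗ v₁.dualMap = s₁ • LinearMap.id := by
    ext φ y
    simp [hvu₁]
  have hcomp : exteriorPower.map n₂ u₁.dualMap ∘ₗ exteriorPower.map n₂ θ.dualMap ∘ₗ
      exteriorPower.map n₂ v₂.dualMap = LinearMap.det T • LinearMap.id := by
    rw [← exteriorPower.map_comp, ← exteriorPower.map_comp, LinearMap.dualMap_comp_dualMap,
      LinearMap.dualMap_comp_dualMap, ← LinearMap.det_dualMap]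
    exact exteriorPower.map_eq_det_smul (Pi.basisFun A (Fin n₂)).dualBasis _
  rw [← length_localized_coker_eq S (exteriorPower.map n₂ θ.dualMap)
    (exteriorPower.map n₂ v₂.dualMap) (exteriorPower.map n₂ u₂.dualMap)
    (exteriorPower.map n₂ v₁.dualMap) (exteriorPower.map n₂ u₁.dualMap)
    (S.pow_mem hs₂ n₂) (S.pow_mem hs₁ n₂), hcomp]
  · -- `⋀^n` of the dual of `A^n` is free of rank one
    obtain ⟨e⟩ : Nonempty (A ≃ₗ[A] ⋀[A]^n₂ (Module.Dual A (Fin n₂ → A))) :=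
      Module.nonempty_linearEquiv_of_finrank_eq_one <| by
        rw [exteriorPower.finrank_eq,
          Module.finrank_eq_card_basis (Pi.basisFun A (Fin n₂)).dualBasis, Fintype.card_fin,
          Nat.choose_self]
    exact (length_localized_quotient_range_smul S e _).symm
  · intro x
    rw [exteriorPower.map_map_eq_pow_smul n₂ hD₂, map_smul, map_smul]
  · exact exteriorPower.map_map_eq_pow_smul n₂ hD₁'
  · intro x
    exact ⟨1, S.one_mem, by rw [exteriorPower.map_map_eq_pow_smul n₂ hD₁]⟩
end

section
/- Let p be a prime number, let A → R be a homomorphism of commutative rings with p·1 = 0 in R, and let D: R → R be an A-derivation (an additive, A-linear map satisfying the Leibniz rule D(xy) = x·D(y) + y·D(x)). Then the p-fold composite D^p = D ∘ ⋯ ∘ D (p times) is again an A-derivation of R; in particular D^p(xy) = x·D^p(y) + y·D^p(x) for all x, y ∈ R. -/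
/-!
By the general Leibniz rule, `D^n (x * y) = ∑_{i + j = n} (n choose i) * D^i x * D^j y`.
When `n = p` is the characteristic, `p` divides `p choose i` for `0 < i < p`, so only the two
extreme terms `i = 0` and `i = p` survive, and these make up the Leibniz rule for `D^p`.
-/

open Finset in
/-- The general Leibniz rule. -/
lemma Derivation.iterate_apply_mul {A R : Type*} [CommRing A] [CommRing R] [Algebra A R]
    (D : Derivation A R R) (n : ℕ) (x y : R) :
    D^[n] (x * y) =
      ∑ ij ∈ antidiagonal n, (n.choose ij.1 : R) * (D^[ij.1] x * D^[ij.2] y) := by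
  induction n with
  | zero => simp
  | succ n ih =>
    rw [sum_antidiagonal_choose_succ_mul (fun i j => D^[i] x * D^[j] y) n,
      Function.iterate_succ_apply', ih, map_sum, ← sum_add_distrib]
    refine sum_congr rfl fun ij h => ?_
    rw [HasAntidiagonal.mem_antidiagonal] at h
    rw [← Nat.choose_symm_of_eq_add h.symm, Function.iterate_succ_apply',
      Function.iterate_succ_apply', D.leibniz, D.map_natCast, D.leibniz]
    simp only [smul_eq_mul]
    ring

open Finset in
lemma Derivation.iterate_prime_apply_mul {p : ℕ} (hp : p.Prime) {A R : Type*} [CommRing A]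
    [CommRing R] [Algebra A R] [CharP R p] (D : Derivation A R R) (x y : R) :
    D^[p] (x * y) = x * D^[p] y + y * D^[p] x := by
  rw [D.iterate_apply_mul, Nat.sum_antidiagonal_eq_sum_range_succ_mk, sum_range_succ,
    sum_eq_single_of_mem 0 (mem_range.2 hp.pos)]
  · simp [mul_comm y]
  · intro i hi h0
    rw [(CharP.cast_eq_zero_iff R p _).2 (hp.dvd_choose_self h0 (mem_range.1 hi)), zero_mul]

/-- Let `p` be a prime, `A → R` a homomorphism of commutative rings with
`p • 1 = 0` in `R`, and let `D : R → R` be an `A`-derivation.  Then the `p`-fold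
composite `D^p = D ∘ ⋯ ∘ D` is again an `A`-derivation of `R`; in particular
`D^p (x*y) = x * D^p y + y * D^p x` for all `x, y ∈ R`. -/
theorem derivation_pow_p_isDerivation
    (p : ℕ) (hp : p.Prime) (A R : Type*) [CommRing A] [CommRing R] [Algebra A R]
    [CharP R p] (D : Derivation A R R) :
    (∃ E : Derivation A R R, ∀ x : R, E x = (⇑D)^[p] x) ∧
    (∀ x y : R, (⇑D)^[p] (x * y) = x * (⇑D)^[p] y + y * (⇑D)^[p] x) := by
  have hpow (x : R) : ((D : R →ₗ[A] R) ^ p) x = D^[p] x := Module.End.pow_apply _ p x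
  refine ⟨⟨Derivation.mk' ((D : R →ₗ[A] R) ^ p) fun x y => ?_, hpow⟩,
    D.iterate_prime_apply_mul hp⟩
  simp only [hpow, smul_eq_mul]
  exact D.iterate_prime_apply_mul hp x y
end
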